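/- Let k be an infinite perfect field, m ≥ 0 an integer, and n, r, s ≥ 2 integers with gcd(r,s) = 1. Let R = k[x_0,…,x_m,y,z,t]/((x_0⋯x_m)^n z − y^r − t^s − x_0) and let p : R → k be the k-algebra homomorphism determined by p(x_i) = 1 for all i, p(y) = 0, p(z) = 1, p(t) = 0. Then for every field extension L of k and any two k-algebra homomorphisms α, β : R → L, neither of which equals the composite of p with the inclusion k → L, there exist an integer N ≥ 1, k-algebra homomorphisms q_0,…,q_N : R → L with q_0 = α and q_N = β, and k-algebra homomorphisms h_1,…,h_N : R → L[T] such that for every 1 ≤ i ≤ N: composing h_i with evaluation at T = 0 gives q_{i−1}, composing h_i with evaluation at T = 1 gives q_i, and the ideal of L[T] generated by h_i(x_0) − 1, …, h_i(x_m) − 1, h_i(y), h_i(z) − 1, h_i(t) is the unit ideal. -/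

import Mathlib

open MvPolynomial

/-- The ideal of the generalized Koras–Russell variety
`X_m = {(x_0⋯x_m)^n z = y^r + t^s + x_0}`.  Variables: `Sum.inl i = x_i`,
`Sum.inr 0 = y`, `Sum.inr 1 = z`, `Sum.inr 2 = t`. -/
noncomputable abbrev krIdeal (k : Type*) [Field k] (m n r s : ℕ) :
    Ideal (MvPolynomial (Fin (m + 1) ⊕ Fin 3) k) :=
  Ideal.span
    {(∏ i : Fin (m + 1), X (Sum.inl i)) ^ n * X (Sum.inr 1) -
      X (Sum.inr 0) ^ r - X (Sum.inr 2) ^ s - X (Sum.inl 0)}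

/-- The coordinate ring `R = k[x_0,…,x_m,y,z,t]/((x_0⋯x_m)^n z − y^r − t^s − x_0)`. -/
abbrev krAlg (k : Type*) [Field k] (m n r s : ℕ) : Type _ :=
  MvPolynomial (Fin (m + 1) ⊕ Fin 3) k ⧸ krIdeal k m n r s

/-- The image of the coordinate variable `v` in the coordinate ring. -/
noncomputable def krVar (k : Type*) [Field k] (m n r s : ℕ) (v : Fin (m + 1) ⊕ Fin 3) :
    krAlg k m n r s :=
  Ideal.Quotient.mk (krIdeal k m n r s) (X v)

/-!
Write `x = (x₀, …, x_m)` and project `X_m` to `𝔸^{m+1}` by `x`.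

* Where `∏ xᵢ` is invertible, `z` is determined by `(x, y, t)`, so the fibre is a `(y, t)`-plane,
  from which the origin is removed when `x = (1, …, 1)`; two points are joined by line segments.
* Where `x₀ = 0`, the fibre is the product of the cuspidal curve `y^r + t^s = 0` with the
  `z`-line; it is contracted to a point by the `𝔾ₘ`-action `(y, z, t) ↦ (λ^s y, λ z, λ^r t)`
  extended to `λ = 0`.
* These fibres are connected to each other along a section over the `x₀`-line. Since `r` and `s` are
  coprime, one of them, say `r`, is nonzero in `L`, and `c^r + d^s = 0` for suitable signs `c`, `d`.
  Hensel's lemma then lifts `c` to a polynomial `Y` with `T^n ∣ Y^r + d^s + T`, and dividing by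
  `T^n` gives the coordinate `z` of the section. The constant `t = d ≠ 0` keeps it away from `p`.

In this way every point with `x₁, …, x_m ≠ 0` reaches the affine space `x₀ = -1`, `y = 1`,
`z = t = 0`. A point with `x_j = 0` for some `j ≠ 0` reaches it at once, because there the equation
reads `x₀ = -(y^r + t^s)` and leaves `y`, `z`, `t` free.
-/

open scoped Polynomial
open Relation (TransGen)

section General

theorem exists_relSeries_of_transGen {α : Type*} {R : α → α → Prop} {a b : α}
    (h : TransGen R a b) :
    ∃ c : RelSeries {(u, v) | R u v}, c.length ≠ 0 ∧ c.head = a ∧ c.last = b := by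
  induction h with
  | single hab =>
    exact ⟨(RelSeries.singleton _ a).snoc _ hab, Nat.succ_ne_zero _,
      RelSeries.head_snoc .., RelSeries.last_snoc ..⟩
  | tail _ hbc ih =>
    obtain ⟨c, -, rfl, rfl⟩ := ih
    exact ⟨c.snoc _ hbc, Nat.succ_ne_zero _, RelSeries.head_snoc .., RelSeries.last_snoc ..⟩

theorem span_eq_top_iff_exists_ne_zero {K : Type*} [Field K] {S : Set K} :
    Ideal.span S = ⊤ ↔ ∃ a ∈ S, a ≠ 0 := by
  rw [← not_iff_not]
  push Not
  rw [← Ideal.span_eq_bot]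
  rcases Ideal.eq_bot_or_top (Ideal.span S) with h | h <;> simp [h]

variable {A : Type*} [CommRing A]

theorem exists_pow_add_eq_zero_of_isNilpotent {r : ℕ} {c a : A} (hr : IsUnit (r : A))
    (hc : IsUnit c) (h : IsNilpotent (c ^ r + a)) : ∃ y, y ^ r + a = 0 := by
  obtain ⟨y, ⟨-, hy⟩, -⟩ := Polynomial.existsUnique_nilpotent_sub_and_aeval_eq_zero
    (P := (Polynomial.X ^ r + Polynomial.C a : A[X])) (x := c) (by simpa using h)
    (by simpa [Polynomial.derivative_X_pow] using And.intro hr (hc.pow (r - 1)))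
  exact ⟨y, by simpa using hy⟩

theorem exists_X_pow_dvd_pow_add {r : ℕ} {c : A} {F : A[X]} (hr : IsUnit (r : A))
    (hc : IsUnit c) (h : c ^ r + F.eval 0 = 0) (n : ℕ) :
    ∃ Y : A[X], Polynomial.X ^ n ∣ Y ^ r + F := by
  let π := Ideal.Quotient.mk (Ideal.span {(Polynomial.X : A[X]) ^ n})
  have hnil : IsNilpotent (π (.C c) ^ r + π F) := by
    have hdvd : Polynomial.X ∣ Polynomial.C c ^ r + F := by
      rw [Polynomial.X_dvd_iff, Polynomial.coeff_zero_eq_eval_zero]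
      simpa using h
    refine ⟨n, ?_⟩
    rw [← map_pow, ← map_add, ← map_pow, Ideal.Quotient.eq_zero_iff_dvd]
    exact pow_dvd_pow_of_dvd hdvd n
  obtain ⟨y, hy⟩ := exists_pow_add_eq_zero_of_isNilpotent
    (by simpa using hr.map (π.comp Polynomial.C)) (hc.map (π.comp Polynomial.C)) hnil
  obtain ⟨Y, rfl⟩ := Ideal.Quotient.mk_surjective y
  exact ⟨Y, by rwa [← map_pow, ← map_add, Ideal.Quotient.eq_zero_iff_dvd] at hy⟩

theorem exists_isUnit_pow_add_pow_eq_zero {r s : ℕ} (hrs : r.Coprime s) :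
    ∃ c d : A, IsUnit c ∧ IsUnit d ∧ c ^ r + d ^ s = 0 := by
  rcases Nat.even_or_odd r with hr | hr
  · have hs : Odd s := Nat.not_even_iff_odd.1 fun hs =>
      Nat.not_coprime_of_dvd_of_dvd one_lt_two hr.two_dvd hs.two_dvd hrs
    exact ⟨1, -1, isUnit_one, isUnit_one.neg, by simp [hs.neg_one_pow]⟩
  · exact ⟨-1, 1, isUnit_one.neg, isUnit_one, by simp [hr.neg_one_pow]⟩

theorem exists_X_pow_dvd_pow_add_pow_add_X {L : Type*} [Field L] (n : ℕ) {r s : ℕ}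
    (hrs : r.Coprime s) :
    ∃ Y W : L[X], Polynomial.X ^ n ∣ Y ^ r + W ^ s + Polynomial.X ∧ (IsUnit Y ∨ IsUnit W) := by
  obtain ⟨c, d, hc, hd, hcd⟩ := exists_isUnit_pow_add_pow_eq_zero (A := L) hrs
  rcases (hrs.cast (R := L)).ne_zero_or_ne_zero with hr | hs
  · obtain ⟨Y, hY⟩ := exists_X_pow_dvd_pow_add (F := .C d ^ s + .X) hr.isUnit hc
      (by simpa using hcd) n
    exact ⟨Y, .C d, by rwa [add_assoc], .inr (hd.map _)⟩
  · obtain ⟨W, hW⟩ := exists_X_pow_dvd_pow_add (F := .C c ^ r + .X) hs.isUnit hd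
      (by simpa [add_comm] using hcd) n
    exact ⟨.C c, W, by rwa [add_assoc, add_left_comm], .inl (hc.map _)⟩

/-- The parametrization `a + (b - a) T` of the line through `a` and `b`, as a polynomial in `T`. -/
noncomputable def linePoly (a b : A) : A[X] :=
  .C a + .C (b - a) * .X

@[simp]
theorem eval_zero_linePoly (a b : A) : (linePoly a b).eval 0 = a := by simp [linePoly]

@[simp]
theorem eval_one_linePoly (a b : A) : (linePoly a b).eval 1 = b := by simp [linePoly]

@[simp]
theorem linePoly_self (a : A) : linePoly a a = .C a := by simp [linePoly]

end General

/-- An `A`-point of the generalized Koras–Russell variety `X_m`, given by its coordinates. -/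
@[ext]
structure KRPoint (m n r s : ℕ) (A : Type*) [CommRing A] where
  x : Fin (m + 1) → A
  y : A
  z : A
  t : A
  eqn : (∏ i, x i) ^ n * z = y ^ r + t ^ s + x 0

namespace KRPoint

section CommRing

variable {m n r s : ℕ} {A B : Type*} [CommRing A] [CommRing B]

/-- The image of a point under a change of rings. -/
@[simps]
def map (f : A →+* B) (a : KRPoint m n r s A) : KRPoint m n r s B where
  x i := f (a.x i)
  y := f a.y
  z := f a.z
  t := f a.t
  eqn := by simpa using congrArg f a.eqn

/-- The point, viewed as a morphism `Spec A → X_m`, misses the section `p = (1, …, 1, 0, 1, 0)`. -/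
def AvoidsBase (a : KRPoint m n r s A) : Prop :=
  Ideal.span ((Set.range fun i => a.x i - 1) ∪ {a.y, a.z - 1, a.t}) = ⊤

theorem avoidsBase_of_isUnit_x_sub_one {a : KRPoint m n r s A} (i : Fin (m + 1))
    (h : IsUnit (a.x i - 1)) : a.AvoidsBase :=
  Ideal.eq_top_of_isUnit_mem _ (Ideal.subset_span (.inl ⟨i, rfl⟩)) h

theorem avoidsBase_of_isUnit_y {a : KRPoint m n r s A} (h : IsUnit a.y) : a.AvoidsBase :=
  Ideal.eq_top_of_isUnit_mem _ (Ideal.subset_span (.inr (by simp))) h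

theorem avoidsBase_of_isUnit_t {a : KRPoint m n r s A} (h : IsUnit a.t) : a.AvoidsBase :=
  Ideal.eq_top_of_isUnit_mem _ (Ideal.subset_span (.inr (by simp))) h

theorem AvoidsBase.map {a : KRPoint m n r s A} (h : a.AvoidsBase) (f : A →+* B) :
    (a.map f).AvoidsBase := by
  have := congrArg (Ideal.map f) h
  rw [Ideal.map_span, Ideal.map_top, Set.image_union, ← Set.range_comp] at this
  simpa [AvoidsBase, Set.image_insert_eq, Function.comp_def] using this

theorem ext_of_isUnit_prod {a b : KRPoint m n r s A} (hu : IsUnit (∏ i, a.x i))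
    (hx : a.x = b.x) (hy : a.y = b.y) (ht : a.t = b.t) : a = b := by
  refine KRPoint.ext hx hy ((hu.pow n).mul_left_cancel ?_) ht
  rw [a.eqn, hy, ht, hx, b.eqn]

/-- The point with prescribed `x`, `y`, `t`, where `∏ xᵢ` is invertible, so that the equation can be
solved for `z`. -/
@[simps]
noncomputable def ofIsUnitProd (x : Fin (m + 1) → A) (hu : IsUnit (∏ i, x i)) (y t : A) :
    KRPoint m n r s A where
  x := x
  y := y
  z := ↑(hu.pow n).unit⁻¹ * (y ^ r + t ^ s + x 0)
  t := t
  eqn := by rw [← mul_assoc, IsUnit.mul_val_inv, one_mul]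

/-- The point with `y = z = t = 0` over `x` with `x₀ = 0`, to which the fibre over `x` contracts. -/
@[simps]
def vertex (hr : r ≠ 0) (hs : s ≠ 0) (x : Fin (m + 1) → A) (hx : x 0 = 0) :
    KRPoint m n r s A where
  x := x
  y := 0
  z := 0
  t := 0
  eqn := by simp [hr, hs, hx]

/-- The point `(-1, x₁, …, x_m, 1, 0, 0)`; such points form an affine space in `X_m \ {p}`, in which
all chains of homotopies meet. -/
@[simps]
def affineSlice (hs : s ≠ 0) (x : Fin m → A) : KRPoint m n r s A where
  x := Fin.cons (-1) x
  y := 1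
  z := 0
  t := 0
  eqn := by simp [hs]

/-- Two points are joined by a single `𝔸¹`-homotopy in `X_m \ {p}`. -/
def Homotopic (a b : KRPoint m n r s A) : Prop :=
  ∃ c : KRPoint m n r s A[X], c.AvoidsBase ∧
    c.map (Polynomial.evalRingHom 0) = a ∧ c.map (Polynomial.evalRingHom 1) = b

theorem map_compRingHom_map_evalRingHom (c : KRPoint m n r s A[X]) (q : A[X]) (u : A) :
    (c.map (Polynomial.compRingHom q)).map (Polynomial.evalRingHom u) =
      c.map (Polynomial.evalRingHom (q.eval u)) := by
  ext <;> simp [Polynomial.eval_comp]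

theorem AvoidsBase.homotopic_map_evalRingHom {c : KRPoint m n r s A[X]} (hc : c.AvoidsBase)
    (u v : A) :
    Homotopic (c.map (Polynomial.evalRingHom u)) (c.map (Polynomial.evalRingHom v)) :=
  ⟨c.map (Polynomial.compRingHom (linePoly u v)), hc.map _,
    by rw [map_compRingHom_map_evalRingHom, eval_zero_linePoly],
    by rw [map_compRingHom_map_evalRingHom, eval_one_linePoly]⟩

theorem Homotopic.symm {a b : KRPoint m n r s A} (h : Homotopic a b) : Homotopic b a := by
  obtain ⟨c, hc, rfl, rfl⟩ := h
  exact hc.homotopic_map_evalRingHom 1 0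

/-- Two points are joined by a chain of at least one `𝔸¹`-homotopy in `X_m \ {p}`. -/
abbrev ChainHomotopic : KRPoint m n r s A → KRPoint m n r s A → Prop :=
  TransGen Homotopic

theorem ChainHomotopic.symm {a b : KRPoint m n r s A} (h : ChainHomotopic a b) :
    ChainHomotopic b a := by
  have : Std.Symm (Homotopic (m := m) (n := n) (r := r) (s := s) (A := A)) :=
    ⟨fun _ _ => Homotopic.symm⟩
  exact Std.Symm.symm _ _ h

theorem homotopic_of_isUnit_prod {a b : KRPoint m n r s A} (hu : IsUnit (∏ i, a.x i))
    (hx : a.x = b.x)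
    (h : (∃ i, IsUnit (a.x i - 1)) ∨ (IsUnit a.y ∧ a.y = b.y) ∨ (IsUnit a.t ∧ a.t = b.t)) :
    Homotopic a b := by
  have hu' : IsUnit (∏ i, Polynomial.C (a.x i)) := by
    simpa using hu.map (Polynomial.C : A →+* A[X])
  let c : KRPoint m n r s A[X] :=
    ofIsUnitProd (fun i => .C (a.x i)) hu' (linePoly a.y b.y) (linePoly a.t b.t)
  refine ⟨c, ?_, ?_, ?_⟩
  · rcases h with ⟨i, hi⟩ | ⟨hy, hab⟩ | ⟨ht, hab⟩
    · exact avoidsBase_of_isUnit_x_sub_one i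
        (by simpa [c] using hi.map (Polynomial.C : A →+* A[X]))
    · exact avoidsBase_of_isUnit_y (by simpa [c, ← hab] using hy)
    · exact avoidsBase_of_isUnit_t (by simpa [c, ← hab] using ht)
  · exact (ext_of_isUnit_prod hu (by ext; simp [c]) (by simp [c]) (by simp [c])).symm
  · exact (ext_of_isUnit_prod (hx ▸ hu) (by ext; simp [c, hx]) (by simp [c]) (by simp [c])).symm

theorem homotopic_vertex (hn : n ≠ 0) (hr : r ≠ 0) (hs : s ≠ 0) (a : KRPoint m n r s A)
    (hx : a.x 0 = 0) : Homotopic (vertex hr hs a.x hx) a := by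
  have hprod : ∏ i, a.x i = 0 := Finset.prod_eq_zero (Finset.mem_univ 0) hx
  have hcusp : a.y ^ r + a.t ^ s = 0 := by simpa [hprod, hn, hx] using a.eqn.symm
  have hprod' : ∏ i, Polynomial.C (a.x i) = 0 := by rw [← map_prod, hprod, map_zero]
  refine ⟨⟨fun i => .C (a.x i), .C a.y * .X ^ s, .C a.z * .X, .C a.t * .X ^ r, ?_⟩, ?_, ?_, ?_⟩
  · have hcusp' := congrArg Polynomial.C hcusp
    simp only [map_add, map_pow, map_zero] at hcusp'
    rw [hprod', zero_pow hn, zero_mul, hx, map_zero]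
    linear_combination -Polynomial.X ^ (r * s) * hcusp'
  · exact avoidsBase_of_isUnit_x_sub_one 0 (by simp [hx])
  · ext <;> simp [hr, hs]
  · ext <;> simp

theorem homotopic_affineSlice_affineSlice (hs : s ≠ 0) (x x' : Fin m → A) :
    Homotopic (affineSlice hs x : KRPoint m n r s A) (affineSlice hs x') := by
  refine ⟨affineSlice hs fun i => linePoly (x i) (x' i), avoidsBase_of_isUnit_y isUnit_one,
    ?_, ?_⟩ <;>
  refine KRPoint.ext (funext (Fin.cases ?_ fun i => ?_)) ?_ ?_ ?_ <;> simp

theorem homotopic_affineSlice_of_x_succ_eq_zero (hn : n ≠ 0) (hs : s ≠ 0)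
    (a : KRPoint m n r s A) (j : Fin m) (hj : a.x j.succ = 0) :
    Homotopic a (affineSlice hs fun i => a.x i.succ) := by
  have hx₀ : a.x 0 = -(a.y ^ r + a.t ^ s) := by
    have h := a.eqn
    rw [Finset.prod_eq_zero (Finset.mem_univ _) hj, zero_pow hn, zero_mul] at h
    linear_combination -h
  let Y := linePoly a.y 1
  let W := linePoly a.t 0
  let x : Fin (m + 1) → A[X] := Fin.cons (-(Y ^ r + W ^ s)) fun i => .C (a.x i.succ)
  have hxj : x j.succ = 0 := by simp [x, hj]
  refine ⟨⟨x, Y, linePoly a.z 0, W, ?_⟩, ?_, ?_, ?_⟩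
  · rw [Finset.prod_eq_zero (Finset.mem_univ _) hxj, zero_pow hn]
    simp [x]
  · exact avoidsBase_of_isUnit_x_sub_one j.succ (by simp [hxj])
  · refine KRPoint.ext (funext (Fin.cases ?_ fun i => ?_)) ?_ ?_ ?_ <;> simp [x, Y, W, hx₀]
  · refine KRPoint.ext (funext (Fin.cases ?_ fun i => ?_)) ?_ ?_ ?_ <;> simp [x, Y, W, hs]

end CommRing

section Field

variable {m n r s : ℕ} {L : Type*} [Field L]

theorem avoidsBase_iff {a : KRPoint m n r s L} :
    a.AvoidsBase ↔ (∃ i, a.x i ≠ 1) ∨ a.y ≠ 0 ∨ a.z ≠ 1 ∨ a.t ≠ 0 := by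
  simp only [AvoidsBase, span_eq_top_iff_exists_ne_zero, Set.mem_union, Set.mem_range,
    Set.mem_insert_iff, Set.mem_singleton_iff, or_and_right, exists_or, exists_eq_left,
    exists_exists_eq_and, sub_ne_zero]

theorem AvoidsBase.x_ne_one_or_y_ne_zero_or_t_ne_zero (hr : r ≠ 0) (hs : s ≠ 0)
    {a : KRPoint m n r s L} (ha : a.AvoidsBase) : (∃ i, a.x i ≠ 1) ∨ a.y ≠ 0 ∨ a.t ≠ 0 := by
  by_contra! h
  obtain ⟨hx, hy, ht⟩ := h
  have hz : a.z = 1 := by simpa [hx, hy, ht, hr, hs] using a.eqn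
  simp [avoidsBase_iff, hx, hy, hz, ht] at ha

theorem AvoidsBase.chainHomotopic_ofIsUnitProd_one_one (hr : r ≠ 0) (hs : s ≠ 0)
    {a : KRPoint m n r s L} (ha : a.AvoidsBase) (hu : IsUnit (∏ i, a.x i)) :
    ChainHomotopic a (ofIsUnitProd a.x hu 1 1) := by
  rcases ha.x_ne_one_or_y_ne_zero_or_t_ne_zero hr hs with ⟨i, hi⟩ | hy | ht
  · exact .single (homotopic_of_isUnit_prod hu rfl (.inl ⟨i, (sub_ne_zero.2 hi).isUnit⟩))
  · exact .trans
      (.single <| homotopic_of_isUnit_prod (b := ofIsUnitProd a.x hu a.y 1) hu rfl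
        (.inr (.inl ⟨hy.isUnit, rfl⟩)))
      (.single <| homotopic_of_isUnit_prod hu rfl (.inr (.inr ⟨isUnit_one, rfl⟩)))
  · exact .trans
      (.single <| homotopic_of_isUnit_prod (b := ofIsUnitProd a.x hu 1 a.t) hu rfl
        (.inr (.inr ⟨ht.isUnit, rfl⟩)))
      (.single <| homotopic_of_isUnit_prod hu rfl (.inr (.inl ⟨isUnit_one, rfl⟩)))

theorem chainHomotopic_of_x_eq (hn : n ≠ 0) (hr : r ≠ 0) (hs : s ≠ 0)
    {a b : KRPoint m n r s L} (ha : a.AvoidsBase) (hb : b.AvoidsBase) (hab : a.x = b.x)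
    (hx : ∀ j : Fin m, a.x j.succ ≠ 0) : ChainHomotopic a b := by
  obtain ⟨x, y, z, t, hE⟩ := a
  obtain rfl : x = b.x := hab
  by_cases hx₀ : b.x 0 = 0
  · exact .trans (.single (homotopic_vertex hn hr hs ⟨b.x, y, z, t, hE⟩ hx₀).symm)
      (.single (homotopic_vertex hn hr hs b hx₀))
  · have hu : IsUnit (∏ i, b.x i) :=
      (Finset.prod_ne_zero_iff.2 fun i _ => i.cases hx₀ hx).isUnit
    exact .trans (ha.chainHomotopic_ofIsUnitProd_one_one hr hs hu)
      (hb.chainHomotopic_ofIsUnitProd_one_one hr hs hu).symm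

theorem exists_section_over_x_zero (n : ℕ) (hrs : r.Coprime s) (x : Fin m → L)
    (hx : ∀ j, x j ≠ 0) :
    ∃ c : KRPoint m n r s L[X], c.AvoidsBase ∧ c.x = Fin.cons .X fun j => .C (x j) := by
  obtain ⟨Y, W, ⟨G, hG⟩, hYW⟩ := exists_X_pow_dvd_pow_add_pow_add_X (L := L) n hrs
  have hunit : IsUnit ((∏ j, Polynomial.C (x j)) ^ n) := by
    rw [← map_prod]
    exact ((Finset.prod_ne_zero_iff.2 fun j _ => hx j).isUnit.map _).pow n
  refine ⟨⟨Fin.cons .X fun j => .C (x j), Y, ↑hunit.unit⁻¹ * G, W, ?_⟩, ?_, rfl⟩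
  · rw [Fin.prod_cons, Fin.cons_zero, hG, mul_pow, mul_assoc, ← mul_assoc (_ ^ n) _ G,
      IsUnit.mul_val_inv, one_mul]
  · exact hYW.elim (avoidsBase_of_isUnit_y ·) (avoidsBase_of_isUnit_t ·)

theorem AvoidsBase.chainHomotopic_affineSlice (hn : n ≠ 0) (hr : r ≠ 0) (hs : s ≠ 0)
    (hrs : r.Coprime s) {a : KRPoint m n r s L} (ha : a.AvoidsBase) :
    ChainHomotopic a (affineSlice hs fun i => a.x i.succ) := by
  by_cases hx : ∃ j : Fin m, a.x j.succ = 0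
  · obtain ⟨j, hj⟩ := hx
    exact .single (homotopic_affineSlice_of_x_succ_eq_zero hn hs a j hj)
  · push Not at hx
    obtain ⟨c, hc, hcx⟩ := exists_section_over_x_zero n hrs _ hx
    let sec (u : L) : KRPoint m n r s L := c.map (Polynomial.evalRingHom u)
    have sec_x (u : L) : (sec u).x = Fin.cons u fun i => a.x i.succ := by
      ext i
      cases i using Fin.cases <;> simp [sec, hcx]
    have sec_avoidsBase (u : L) : (sec u).AvoidsBase := hc.map _
    calc
      ChainHomotopic a (sec (a.x 0)) :=
        chainHomotopic_of_x_eq hn hr hs ha (sec_avoidsBase _)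
          (by rw [sec_x]; exact (Fin.cons_self_tail a.x).symm) hx
      ChainHomotopic _ (sec (-1)) := .single (hc.homotopic_map_evalRingHom _ _)
      ChainHomotopic _ (affineSlice hs fun i => a.x i.succ) :=
        chainHomotopic_of_x_eq hn hr hs (sec_avoidsBase _) (avoidsBase_of_isUnit_y isUnit_one)
          (sec_x _) (by simpa [sec_x] using hx)

theorem AvoidsBase.chainHomotopic (hn : n ≠ 0) (hr : r ≠ 0) (hs : s ≠ 0) (hrs : r.Coprime s)
    {a b : KRPoint m n r s L} (ha : a.AvoidsBase) (hb : b.AvoidsBase) : ChainHomotopic a b :=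
  ((ha.chainHomotopic_affineSlice hn hr hs hrs).tail
    (homotopic_affineSlice_affineSlice hs _ _)).trans
    (hb.chainHomotopic_affineSlice hn hr hs hrs).symm

end Field

section CoordinateRing

variable {k : Type*} [Field k] {m n r s : ℕ} {A B : Type*} [CommRing A] [Algebra k A]
  [CommRing B] [Algebra k B]

variable (k m n r s) in
/-- The universal point of `X_m`, with values in its coordinate ring. -/
@[simps]
noncomputable def generic : KRPoint m n r s (krAlg k m n r s) where
  x i := krVar k m n r s (.inl i)
  y := krVar k m n r s (.inr 0)
  z := krVar k m n r s (.inr 1)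
  t := krVar k m n r s (.inr 2)
  eqn := by
    simp only [krVar, ← map_prod, ← map_pow, ← map_mul, ← map_add]
    rw [Ideal.Quotient.eq]
    convert Ideal.mem_span_singleton_self _ using 1
    ring

/-- The coordinates of a point, indexed as the variables of `krAlg`. -/
def coord (a : KRPoint m n r s A) : Fin (m + 1) ⊕ Fin 3 → A :=
  Sum.elim a.x ![a.y, a.z, a.t]

variable (k) in
/-- Evaluation of regular functions on `X_m` at a point. -/
noncomputable def evalHom (a : KRPoint m n r s A) : krAlg k m n r s →ₐ[k] A :=
  Ideal.Quotient.liftₐ (krIdeal k m n r s) (aeval a.coord) fun f hf => by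
    obtain ⟨g, rfl⟩ := Ideal.mem_span_singleton'.1 hf
    simp [coord, a.eqn, sub_sub, add_assoc]

@[simp]
theorem evalHom_krVar (a : KRPoint m n r s A) (v : Fin (m + 1) ⊕ Fin 3) :
    a.evalHom k (krVar k m n r s v) = a.coord v :=
  aeval_X a.coord v

theorem algHom_ext_of_map_generic {f g : krAlg k m n r s →ₐ[k] A}
    (h : (generic k m n r s).map (f : krAlg k m n r s →+* A) = (generic k m n r s).map g) :
    f = g := by
  have hx := congrFun (congrArg KRPoint.x h)
  have hy := congrArg KRPoint.y h
  have hz := congrArg KRPoint.z h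
  have ht := congrArg KRPoint.t h
  refine Ideal.Quotient.algHom_ext _ (MvPolynomial.algHom_ext ?_)
  rintro (i | i)
  · exact hx i
  · fin_cases i
    exacts [hy, hz, ht]

variable (k m n r s A) in
/-- The functor of points of `X_m`: `k`-algebra homomorphisms `R → A` are `A`-points. -/
noncomputable def algHomEquiv : (krAlg k m n r s →ₐ[k] A) ≃ KRPoint m n r s A where
  toFun f := (generic k m n r s).map f
  invFun a := a.evalHom k
  left_inv f := algHom_ext_of_map_generic (by ext <;> simp [coord])
  right_inv a := by ext <;> simp [coord]

theorem algHomEquiv_symm_map (φ : A →ₐ[k] B) (a : KRPoint m n r s A) :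
    (algHomEquiv k m n r s B).symm (a.map φ) = φ.comp ((algHomEquiv k m n r s A).symm a) := by
  rw [Equiv.symm_apply_eq]
  ext <;> simp [algHomEquiv, coord]

theorem avoidsBase_algHomEquiv_of_ne {L : Type*} [Field L] [Algebra k L]
    {p : krAlg k m n r s →ₐ[k] k}
    (hpx : ∀ i : Fin (m + 1), p (krVar k m n r s (Sum.inl i)) = 1)
    (hpy : p (krVar k m n r s (Sum.inr 0)) = 0)
    (hpz : p (krVar k m n r s (Sum.inr 1)) = 1)
    (hpt : p (krVar k m n r s (Sum.inr 2)) = 0)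
    {f : krAlg k m n r s →ₐ[k] L} (hf : f ≠ (Algebra.ofId k L).comp p) :
    (algHomEquiv k m n r s L f).AvoidsBase := by
  contrapose! hf
  simp only [avoidsBase_iff, not_or, not_exists, not_not] at hf
  obtain ⟨hx, hy, hz, ht⟩ := hf
  apply (algHomEquiv k m n r s L).injective
  ext
  · simpa [algHomEquiv, hpx] using hx _
  · simpa [algHomEquiv, hpy] using hy
  · simpa [algHomEquiv, hpz] using hz
  · simpa [algHomEquiv, hpt] using ht

end CoordinateRing

end KRPoint

open KRPoint in
theorem genKR_minus_point_A1_chain_connected_general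
    (k : Type*) [Field k] (m n r s : ℕ) (hn : n ≠ 0) (hr : r ≠ 0) (hs : s ≠ 0)
    (hrs : Nat.Coprime r s) (p : krAlg k m n r s →ₐ[k] k)
    (hpx : ∀ i : Fin (m + 1), p (krVar k m n r s (Sum.inl i)) = 1)
    (hpy : p (krVar k m n r s (Sum.inr 0)) = 0)
    (hpz : p (krVar k m n r s (Sum.inr 1)) = 1)
    (hpt : p (krVar k m n r s (Sum.inr 2)) = 0)
    (L : Type*) [Field L] [Algebra k L]
    (α β : krAlg k m n r s →ₐ[k] L)
    (hα : α ≠ (Algebra.ofId k L).comp p) (hβ : β ≠ (Algebra.ofId k L).comp p) :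
    ∃ N : ℕ, 1 ≤ N ∧
      ∃ q : Fin (N + 1) → (krAlg k m n r s →ₐ[k] L),
        ∃ h : Fin N → (krAlg k m n r s →ₐ[k] Polynomial L),
          q 0 = α ∧ q (Fin.last N) = β ∧
          ∀ i : Fin N,
            ((Polynomial.aeval (0 : L)).restrictScalars k).comp (h i) = q i.castSucc ∧
            ((Polynomial.aeval (1 : L)).restrictScalars k).comp (h i) = q i.succ ∧
            Ideal.span
              ((Set.range fun j : Fin (m + 1) => h i (krVar k m n r s (Sum.inl j)) - 1) ∪
                {h i (krVar k m n r s (Sum.inr 0)),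
                  h i (krVar k m n r s (Sum.inr 1)) - 1,
                  h i (krVar k m n r s (Sum.inr 2))}) = ⊤ := by
  let pointL := algHomEquiv k m n r s L
  let pointLX := algHomEquiv k m n r s L[X]
  have hchain : ChainHomotopic (pointL α) (pointL β) :=
    (avoidsBase_algHomEquiv_of_ne hpx hpy hpz hpt hα).chainHomotopic hn hr hs hrs
      (avoidsBase_algHomEquiv_of_ne hpx hpy hpz hpt hβ)
  obtain ⟨a, ha, ha₀, ha₁⟩ := exists_relSeries_of_transGen hchain
  choose c hc hc₀ hc₁ using a.step
  refine ⟨a.length, Nat.one_le_iff_ne_zero.2 ha, fun i => pointL.symm (a i),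
    fun i => pointLX.symm (c i), pointL.symm_apply_eq.2 ha₀, pointL.symm_apply_eq.2 ha₁,
    fun i => ⟨?_, ?_, ?_⟩⟩
  · exact (algHomEquiv_symm_map _ (c i)).symm.trans (congrArg pointL.symm (hc₀ i))
  · exact (algHomEquiv_symm_map _ (c i)).symm.trans (congrArg pointL.symm (hc₁ i))
  · have := hc i
    rwa [← pointLX.apply_symm_apply (c i)] at this

/-- Let `k` be an infinite perfect field, `m ≥ 0` and `n, r, s ≥ 2` with
`gcd(r,s) = 1`.  Let `R` be the coordinate ring of
`X_m = {(x_0⋯x_m)^n z = y^r + t^s + x_0}` and `p : R → k` the `k`-point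
`(1,…,1,0,1,0)`.  Then `X_m \ {p}` is `𝔸¹`-chain connected: for every field
extension `L/k`, any two `L`-points `α, β` of `X_m` different from `p` are
joined by a finite chain of elementary `𝔸¹`-homotopies `h_i : R → L[T]`
avoiding `p` (the ideal generated by `h_i(x_j) − 1`, `h_i(y)`, `h_i(z) − 1`,
`h_i(t)` is the unit ideal of `L[T]`). -/
theorem genKR_minus_point_A1_chain_connected
    (k : Type*) [Field k] [Infinite k] [PerfectField k]
    (m n r s : ℕ) (hn : 2 ≤ n) (hr : 2 ≤ r) (hs : 2 ≤ s) (hrs : Nat.Coprime r s)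
    (p : krAlg k m n r s →ₐ[k] k)
    (hpx : ∀ i : Fin (m + 1), p (krVar k m n r s (Sum.inl i)) = 1)
    (hpy : p (krVar k m n r s (Sum.inr 0)) = 0)
    (hpz : p (krVar k m n r s (Sum.inr 1)) = 1)
    (hpt : p (krVar k m n r s (Sum.inr 2)) = 0)
    (L : Type*) [Field L] [Algebra k L]
    (α β : krAlg k m n r s →ₐ[k] L)
    (hα : α ≠ (Algebra.ofId k L).comp p) (hβ : β ≠ (Algebra.ofId k L).comp p) :
    ∃ N : ℕ, 1 ≤ N ∧
      ∃ q : Fin (N + 1) → (krAlg k m n r s →ₐ[k] L),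
        ∃ h : Fin N → (krAlg k m n r s →ₐ[k] Polynomial L),
          q 0 = α ∧ q (Fin.last N) = β ∧
          ∀ i : Fin N,
            ((Polynomial.aeval (0 : L)).restrictScalars k).comp (h i) = q i.castSucc ∧
            ((Polynomial.aeval (1 : L)).restrictScalars k).comp (h i) = q i.succ ∧
            Ideal.span
              ((Set.range fun j : Fin (m + 1) => h i (krVar k m n r s (Sum.inl j)) - 1) ∪
                {h i (krVar k m n r s (Sum.inr 0)),
                  h i (krVar k m n r s (Sum.inr 1)) - 1,
                  h i (krVar k m n r s (Sum.inr 2))}) = ⊤ := by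
  exact genKR_minus_point_A1_chain_connected_general k m n r s (by lia) (by lia) (by lia) hrs
    p hpx hpy hpz hpt L α β hα hβ
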